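/- Let a > 0 be real and let s ∈ ℂ with Re(s) > 1. Then the function x ↦ x^{s+a-2} e^{-x} / (a γ(a,x)) is (Lebesgue) integrable on (0, ∞). -/

import Mathlib

/-!
The integrand is dominated by a sum of two Gamma integrands. Restricting the integral defining
`γ(a, x)` to `(0, min x 1)`, where `e^(-t) ≥ e^(-1)`, gives `e^(-1) (min x 1)^a ≤ a γ(a, x)`
(`exp_mul_min_rpow_le`), so `1 / (a γ(a, x)) ≤ e (x^(-a) + 1)`. With `σ = Re s` the norm of the
integrand is then at most `e (e^(-x) x^(σ - 2) + e^(-x) x^(σ + a - 2))`, which is integrable on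
`(0, ∞)` because `σ - 1 > 0` and `σ + a - 1 > 0`. Measurability of `γ(a, ·)` follows from its
monotonicity.
-/

open MeasureTheory Set

/-- The lower incomplete gamma function `γ(a, x) = ∫₀ˣ t^(a-1) e^(-t) dt`. -/
noncomputable def lowerGamma (a x : ℝ) : ℝ :=
  ∫ t in Set.Ioo (0 : ℝ) x, t ^ (a - 1) * Real.exp (-t)

/-- The domain `D = ℂ \ {1, 0, -1, -2, …}` of the analytic continuation. -/
def fhzDomain : Set ℂ := {s : ℂ | ∀ n : ℕ, s ≠ 1 - (n : ℂ)}

/-- The lower incomplete gamma integrand is integrable on `(0, ∞)`. -/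
lemma integrableOn_lowerGamma (a : ℝ) (ha : 0 < a) :
    IntegrableOn (fun t : ℝ => t ^ (a - 1) * Real.exp (-t)) (Ioi 0) :=
  (Real.GammaIntegral_convergent ha).congr_fun (fun _ _ => mul_comm _ _) measurableSet_Ioi

lemma lowerGamma_mono (a : ℝ) (ha : 0 < a) : Monotone (lowerGamma a) := by
  intro x y hxy
  refine setIntegral_mono_set ((integrableOn_lowerGamma a ha).mono_set Ioo_subset_Ioi_self) ?_
    (Ioo_subset_Ioo_right hxy).eventuallyLE
  filter_upwards [ae_restrict_mem measurableSet_Ioo] with t ht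
  have := ht.1
  simp only [Pi.zero_apply]
  positivity

lemma exp_mul_rpow_le (a : ℝ) (ha : 0 < a) (m : ℝ) (hm : 0 < m) (hm1 : m ≤ 1) :
    Real.exp (-1) * m ^ a ≤ a * lowerGamma a m := by
  have hi : ∫ t in Ioo (0 : ℝ) m, t ^ (a - 1) = m ^ a / a := by
    rw [← integral_Ioc_eq_integral_Ioo, ← intervalIntegral.integral_of_le hm.le,
      integral_rpow (Or.inl (by linarith))]
    simp [Real.zero_rpow ha.ne']
  have hint : IntegrableOn (fun t : ℝ => t ^ (a - 1)) (Ioo 0 m) :=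
    ((intervalIntegrable_iff_integrableOn_Ioc_of_le hm.le).1
      (intervalIntegral.intervalIntegrable_rpow' (by linarith))).mono_set Ioo_subset_Ioc_self
  have h : ∫ t in Ioo (0 : ℝ) m, t ^ (a - 1) * Real.exp (-1) ≤ lowerGamma a m := by
    refine setIntegral_mono_on (hint.mul_const _)
      ((integrableOn_lowerGamma a ha).mono_set Ioo_subset_Ioi_self) measurableSet_Ioo ?_
    intro t ht
    have h0 := ht.1
    have h1 := ht.2
    gcongr
    linarith
  rw [integral_mul_const, hi] at h
  calc Real.exp (-1) * m ^ a = a * (m ^ a / a * Real.exp (-1)) := by field_simp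
    _ ≤ _ := by gcongr

lemma exp_mul_min_rpow_le (a : ℝ) (ha : 0 < a) (x : ℝ) (hx : 0 < x) :
    Real.exp (-1) * (min x 1) ^ a ≤ a * lowerGamma a x :=
  (exp_mul_rpow_le a ha _ (lt_min hx one_pos) (min_le_right _ _)).trans
    (mul_le_mul_of_nonneg_left (lowerGamma_mono a ha (min_le_left _ _)) ha.le)

lemma inv_le_exp_mul (a : ℝ) (ha : 0 < a) (x : ℝ) (hx : 0 < x) :
    (a * lowerGamma a x)⁻¹ ≤ Real.exp 1 * (x ^ (-a) + 1) := by
  have hm : 0 < min x 1 := lt_min hx one_pos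
  have h := inv_anti₀ (by positivity) (exp_mul_min_rpow_le a ha x hx)
  refine h.trans ?_
  rw [mul_inv, ← Real.exp_neg, neg_neg, ← Real.rpow_neg hm.le]
  gcongr
  have := Real.rpow_pos_of_pos hx (-a)
  rcases le_total x 1 with h1 | h1
  · rw [min_eq_left h1]; linarith
  · rw [min_eq_right h1, Real.one_rpow]; linarith

theorem stmt_8 (a : ℝ) (ha : 0 < a) (s : ℂ) (hs : 1 < s.re) :
    MeasureTheory.IntegrableOn
      (fun x : ℝ =>
        (x : ℂ) ^ (s + (a : ℂ) - 2) * (Real.exp (-x) : ℂ) / ((a * lowerGamma a x : ℝ) : ℂ))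
      (Set.Ioi (0 : ℝ)) := by
  have hb : IntegrableOn (fun x : ℝ => Real.exp 1 *
      (Real.exp (-x) * x ^ (s.re - 1 - 1) + Real.exp (-x) * x ^ (s.re + a - 1 - 1))) (Ioi 0) :=
    ((Real.GammaIntegral_convergent (by linarith)).add
      (Real.GammaIntegral_convergent (by linarith))).const_mul _
  refine Integrable.mono' hb ?_ ?_
  · have hmeas : Measurable (lowerGamma a) := (lowerGamma_mono a ha).measurable
    exact Measurable.aestronglyMeasurable (by fun_prop)
  · filter_upwards [ae_restrict_mem measurableSet_Ioi] with x hx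
    have hx : 0 < x := hx
    have hpos : 0 < a * lowerGamma a x :=
      lt_of_lt_of_le (by have := lt_min hx one_pos; positivity) (exp_mul_min_rpow_le a ha x hx)
    rw [norm_div, norm_mul, Complex.norm_cpow_eq_rpow_re_of_pos hx, Complex.norm_real,
      Complex.norm_real, Real.norm_of_nonneg hpos.le, Real.norm_of_nonneg (Real.exp_pos _).le,
      div_eq_mul_inv]
    have he : (s + (a : ℂ) - 2).re = s.re + a - 1 - 1 := by
      simp; ring
    rw [he]
    have hsplit : x ^ (s.re - 1 - 1) = x ^ (s.re + a - 1 - 1) * x ^ (-a) := by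
      rw [← Real.rpow_add hx]; congr 1; ring
    calc _ ≤ x ^ (s.re + a - 1 - 1) * Real.exp (-x) * (Real.exp 1 * (x ^ (-a) + 1)) := by
          gcongr
          exact inv_le_exp_mul a ha x hx
      _ = _ := by rw [hsplit]; ring
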